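/- arXiv:math/0002164 — 8 statements merged into one kernel-verified Lean document; each statement's English description precedes it below -/
import Mathlib

section
/- Let m be a natural number and let Q : Fin m → Fin m → MvPolynomial (Fin m) ℂ satisfy Q b a = -(Q a b) for all a, b. Define a bracket on MvPolynomial (Fin m) ℂ by {u,v} := ∑_{a,b} (Q a b) * (pderiv a u) * (pderiv b v). Then the Jacobi identity {u,{v,w}} + {v,{w,u}} + {w,{u,v}} = 0 holds for all polynomials u, v, w if and only if for all indices b, c, d one has ∑_{a} ( (Q b a) * pderiv a (Q c d) + (Q c a) * pderiv a (Q d b) + (Q d a) * pderiv a (Q b c) ) = 0. -/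
open MvPolynomial

/-- The Poisson-type bracket `{u,v} = ∑_{a,b} Q^{ab} ∂_a u ∂_b v`. -/
noncomputable def poissonBracket {m : ℕ} (Q : Fin m → Fin m → MvPolynomial (Fin m) ℂ)
    (u v : MvPolynomial (Fin m) ℂ) : MvPolynomial (Fin m) ℂ :=
  ∑ a : Fin m, ∑ b : Fin m, Q a b * pderiv a u * pderiv b v

/-!
For a skew bracket `{u, v} = D u v` whose `D u` are derivations, the Jacobiator equals
`(⁅D u, D v⁆ - D {u, v}) w`, so it is a derivation in `w`, and by cyclic symmetry in each of its
arguments. Hence it vanishes identically as soon as it vanishes on algebra generators. On the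
variables of a polynomial ring, `{X c, X d} = Q c d` and `{X b, p} = ∑ a, Q b a * ∂ₐ p`, so there
the Jacobiator is exactly the cyclic sum in the Poisson tensor condition.
-/

section Jacobiator

variable {R A : Type*} [CommRing R] [CommRing A] [Algebra R A] {D : A → Derivation R A A}

/-- The Jacobiator of the bracket `{u, v} = D u v`, that is, the cyclic sum whose vanishing is the
Jacobi identity. The bracket is encoded by its derivations `D u = {u, ·}`. -/
def jacobiator (D : A → Derivation R A A) (u v w : A) : A :=
  D u (D v w) + D v (D w u) + D w (D u v)

theorem jacobiator_rotate (u v w : A) : jacobiator D u v w = jacobiator D w u v := by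
  unfold jacobiator
  abel

theorem jacobiator_eq_commutator_sub_apply (hD : ∀ u v, D v u = -D u v) (u v w : A) :
    jacobiator D u v w = (⁅D u, D v⁆ - D (D u v)) w := by
  rw [jacobiator, hD u w, hD (D u v) w, map_neg, Derivation.sub_apply,
    Derivation.commutator_apply]
  abel

theorem jacobiator_eq_zero_of_forall_mem_right (hD : ∀ u v, D v u = -D u v) {s : Set A}
    (hs : Algebra.adjoin R s = ⊤) {u v : A} (h : ∀ z ∈ s, jacobiator D u v z = 0) (w : A) :
    jacobiator D u v w = 0 := by
  simp only [jacobiator_eq_commutator_sub_apply hD] at h ⊢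
  have hzero : ⁅D u, D v⁆ - D (D u v) = 0 := Derivation.ext_of_adjoin_eq_top s hs h
  rw [hzero, Derivation.zero_apply]

theorem jacobiator_eq_zero_of_adjoin_eq_top (hD : ∀ u v, D v u = -D u v) {s : Set A}
    (hs : Algebra.adjoin R s = ⊤)
    (h : ∀ x ∈ s, ∀ y ∈ s, ∀ z ∈ s, jacobiator D x y z = 0) (u v w : A) :
    jacobiator D u v w = 0 := by
  have mem_mem {x y : A} (hx : x ∈ s) (hy : y ∈ s) (w : A) : jacobiator D x y w = 0 :=
    jacobiator_eq_zero_of_forall_mem_right hD hs (h x hx y hy) w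
  have mem {x : A} (hx : x ∈ s) (v w : A) : jacobiator D x v w = 0 :=
    jacobiator_eq_zero_of_forall_mem_right hD hs
      (fun z hz ↦ (jacobiator_rotate x v z).trans (mem_mem hz hx v)) w
  exact jacobiator_eq_zero_of_forall_mem_right hD hs
    (fun z hz ↦ (jacobiator_rotate u v z).trans (mem hz u v)) w

end Jacobiator

section HamiltonianDerivation

variable {R σ : Type*} [CommRing R] [Fintype σ] (Q : σ → σ → MvPolynomial σ R)

/-- The Hamiltonian derivation `{u, ·} = ∑_{a,b} Q^{ab} ∂_a u ∂_b` of a polynomial `u` with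
respect to the bivector `Q`, over any coefficient ring and any finite set of variables. -/
noncomputable def hamiltonianDerivation (u : MvPolynomial σ R) :
    Derivation R (MvPolynomial σ R) (MvPolynomial σ R) :=
  ∑ a, ∑ b, (Q a b * pderiv a u) • pderiv b

theorem hamiltonianDerivation_apply (u v : MvPolynomial σ R) :
    hamiltonianDerivation Q u v = ∑ a, ∑ b, Q a b * pderiv a u * pderiv b v := by
  rw [hamiltonianDerivation, ← Derivation.coeFnAddMonoidHom_apply]
  simp

theorem hamiltonianDerivation_X_apply (b : σ) (p : MvPolynomial σ R) :
    hamiltonianDerivation Q (X b) p = ∑ a, Q b a * pderiv a p := by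
  classical
  rw [hamiltonianDerivation_apply, Finset.sum_comm]
  simp [pderiv_X, Pi.single_apply]

theorem hamiltonianDerivation_X_X (c d : σ) : hamiltonianDerivation Q (X c) (X d) = Q c d := by
  classical
  simp [hamiltonianDerivation_X_apply, pderiv_X, Pi.single_apply]

theorem jacobiator_hamiltonianDerivation_X (b c d : σ) :
    jacobiator (hamiltonianDerivation Q) (X b) (X c) (X d) =
      ∑ a, (Q b a * pderiv a (Q c d) + Q c a * pderiv a (Q d b) + Q d a * pderiv a (Q b c)) := by
  simp only [jacobiator, hamiltonianDerivation_X_X]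
  simp only [hamiltonianDerivation_X_apply, Finset.sum_add_distrib]

variable {Q}

theorem hamiltonianDerivation_swap (hskew : ∀ a b, Q b a = -Q a b) (u v : MvPolynomial σ R) :
    hamiltonianDerivation Q v u = -hamiltonianDerivation Q u v := by
  simp only [hamiltonianDerivation_apply, ← Finset.sum_neg_distrib]
  rw [Finset.sum_comm]
  refine Finset.sum_congr rfl fun a _ ↦ Finset.sum_congr rfl fun b _ ↦ ?_
  rw [hskew a b]
  ring

theorem stmt_0_general (hskew : ∀ a b, Q b a = -Q a b) :
    (∀ u v w, jacobiator (hamiltonianDerivation Q) u v w = 0) ↔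
      ∀ b c d, ∑ a, (Q b a * pderiv a (Q c d) + Q c a * pderiv a (Q d b)
        + Q d a * pderiv a (Q b c)) = 0 := by
  simp only [← jacobiator_hamiltonianDerivation_X]
  refine ⟨fun h b c d ↦ h (X b) (X c) (X d), fun h ↦ ?_⟩
  apply jacobiator_eq_zero_of_adjoin_eq_top (hamiltonianDerivation_swap hskew) adjoin_range_X
  rintro _ ⟨b, rfl⟩ _ ⟨c, rfl⟩ _ ⟨d, rfl⟩
  exact h b c d

end HamiltonianDerivation

theorem poissonBracket_eq_hamiltonianDerivation {m : ℕ}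
    (Q : Fin m → Fin m → MvPolynomial (Fin m) ℂ) (u v : MvPolynomial (Fin m) ℂ) :
    poissonBracket Q u v = hamiltonianDerivation Q u v :=
  (hamiltonianDerivation_apply Q u v).symm

theorem stmt_0 (m : ℕ) (Q : Fin m → Fin m → MvPolynomial (Fin m) ℂ)
    (hskew : ∀ a b : Fin m, Q b a = -(Q a b)) :
    (∀ u v w : MvPolynomial (Fin m) ℂ,
        poissonBracket Q u (poissonBracket Q v w)
          + poissonBracket Q v (poissonBracket Q w u)
          + poissonBracket Q w (poissonBracket Q u v) = 0) ↔
      (∀ b c d : Fin m,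
        ∑ a : Fin m, (Q b a * pderiv a (Q c d) + Q c a * pderiv a (Q d b)
          + Q d a * pderiv a (Q b c)) = 0) := by
  simpa only [poissonBracket_eq_hamiltonianDerivation, jacobiator] using stmt_0_general hskew
end

section
/- Let ι be a finite type and let f : ι → MvPolynomial ι ℂ. Then there exists a unique ℂ-algebra homomorphism F : R → R such that F(t^a_0) = ĵ(f a) for every a ∈ ι and F(∂u) = ∂(F u) for every u ∈ R. (Explicitly, F is determined by F(t^a_k) = ∂^k(ĵ(f a)).) -/
open MvPolynomial

/-!
The jet algebra with its total derivative is the free differential algebra on the variables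
`t^a_0`, because `t^a_k = ∂^k t^a_0`. A differential homomorphism out of it must therefore send
`t^a_k` to `d^k` of the image of `t^a_0`. Conversely, the algebra homomorphism defined by these
values commutes with the derivations on generators, hence everywhere by the Leibniz rule.
-/

section Derivation

variable {R A B : Type*} [CommSemiring R] [CommSemiring A] [Algebra R A]
  [CommSemiring B] [Algebra R B]

theorem semiconj_derivation_of_adjoin_eq_top {s : Set B} (hs : Algebra.adjoin R s = ⊤)
    (F : B →ₐ[R] A) (D : Derivation R B B) (d : Derivation R A A)
    (h : ∀ x ∈ s, F (D x) = d (F x)) : Function.Semiconj F D d := by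
  intro u
  have hu : u ∈ Algebra.adjoin R s := hs ▸ Algebra.mem_top
  induction hu using Algebra.adjoin_induction with
  | mem x hx => exact h x hx
  | algebraMap r => simp only [Derivation.map_algebraMap, AlgHom.commutes, map_zero]
  | add x y _ _ hx hy => simp only [map_add, hx, hy]
  | mul x y _ _ hx hy => simp only [Derivation.leibniz, smul_eq_mul, map_add, map_mul, hx, hy]

end Derivation

section Jet

variable {ι R A : Type*} [CommSemiring R] [CommSemiring A] [Algebra R A]

/-- The prolongation of `g : ι → A` to jets: the algebra homomorphism from the jet algebra to the
differential algebra `(A, d)` with `t^a_k ↦ d^k (g a)`. -/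
noncomputable def prolongation (d : Derivation R A A) (g : ι → A) :
    MvPolynomial (ι × ℕ) R →ₐ[R] A :=
  aeval fun p => d^[p.2] (g p.1)

theorem prolongation_X (d : Derivation R A A) (g : ι → A) (a : ι) (k : ℕ) :
    prolongation d g (X (a, k)) = d^[k] (g a) :=
  aeval_X _ _

variable {D : Derivation R (MvPolynomial (ι × ℕ) R) (MvPolynomial (ι × ℕ) R)}

theorem iterate_totalDerivative_X_zero (hD : ∀ a k, D (X (a, k)) = X (a, k + 1)) (a : ι) (k : ℕ) :
    D^[k] (X (a, 0)) = X (a, k) := by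
  induction k with
  | zero => rfl
  | succ k ih => rw [Function.iterate_succ_apply', ih, hD]

theorem semiconj_prolongation (hD : ∀ a k, D (X (a, k)) = X (a, k + 1))
    (d : Derivation R A A) (g : ι → A) : Function.Semiconj (prolongation d g) D d := by
  refine semiconj_derivation_of_adjoin_eq_top adjoin_range_X _ D d ?_
  rintro _ ⟨⟨a, k⟩, rfl⟩
  rw [hD, prolongation_X, prolongation_X, Function.iterate_succ_apply']

theorem eq_prolongation_of_semiconj (hD : ∀ a k, D (X (a, k)) = X (a, k + 1))
    {d : Derivation R A A} {F : MvPolynomial (ι × ℕ) R →ₐ[R] A} (hF : Function.Semiconj F D d) :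
    F = prolongation d fun a => F (X (a, 0)) := by
  ext ⟨a, k⟩
  calc F (X (a, k)) = F (D^[k] (X (a, 0))) := by rw [iterate_totalDerivative_X_zero hD]
    _ = d^[k] (F (X (a, 0))) := hF.iterate_right k (X (a, 0))
    _ = prolongation d (fun a => F (X (a, 0))) (X (a, k)) := by rw [prolongation_X]

theorem stmt_1_general (hD : ∀ a k, D (X (a, k)) = X (a, k + 1))
    (d : Derivation R A A) (g : ι → A) :
    ∃! F : MvPolynomial (ι × ℕ) R →ₐ[R] A,
      (∀ a, F (X (a, 0)) = g a) ∧ ∀ u, F (D u) = d (F u) := by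
  refine ⟨prolongation d g,
    ⟨fun a => prolongation_X d g a 0, semiconj_prolongation hD d g⟩, ?_⟩
  rintro F ⟨hF_zero, hF_comm⟩
  rw [eq_prolongation_of_semiconj hD hF_comm, funext hF_zero]

end Jet

/-- Prolongation of a polynomial map to the jet algebra: existence and uniqueness of the
algebra endomorphism `F` with `F t^a_0 = ĵ(f a)` commuting with the total derivative. -/
theorem stmt_1 (ι : Type*) [Fintype ι] (f : ι → MvPolynomial ι ℂ)
    (D : Derivation ℂ (MvPolynomial (ι × ℕ) ℂ) (MvPolynomial (ι × ℕ) ℂ))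
    (hD : ∀ (a : ι) (k : ℕ), D (X (a, k)) = X (a, k + 1)) :
    ∃! F : MvPolynomial (ι × ℕ) ℂ →ₐ[ℂ] MvPolynomial (ι × ℕ) ℂ,
      (∀ a : ι, F (X (a, 0)) = rename (fun a : ι => (a, 0)) (f a)) ∧
        (∀ u : MvPolynomial (ι × ℕ) ℂ, F (D u) = D (F u)) :=
  stmt_1_general hD D fun a => rename (fun a : ι => (a, 0)) (f a)
end

section
/- Let ι be a finite type. For every u ∈ R, every a ∈ ι and all natural numbers k, ℓ, one has ∂_{k,a}(∂^ℓ u) = ∑_{j=0}^{min(k,ℓ)} (ℓ choose j) · ∂^{ℓ-j}( ∂_{k-j,a} u ). -/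
open MvPolynomial

/-!
Collect the operators `∂_{k,a}` into the generating series `P(t) = ∑ k, ∂_{k,a} t ^ k`, a power
series over the noncommutative ring of linear endomorphisms. The relations
`[∂_{0,a}, ∂] = 0` and `[∂_{k+1,a}, ∂] = ∂_{k,a}` say exactly that `P(t) ∂ = (∂ + t) P(t)`. Hence
`P(t) ∂ ^ ℓ = (∂ + t) ^ ℓ P(t)`, and since `t` is central the binomial theorem expands the right
hand side; the claim is the equality of the coefficients of `t ^ k`.
-/

section GeneratingSeries

variable {A : Type*} [Semiring A]

theorem semiconjBy_mk_C_add_X {p : ℕ → A} {d : A} (h_zero : Commute (p 0) d)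
    (h_succ : ∀ k, p (k + 1) * d = d * p (k + 1) + p k) :
    SemiconjBy (PowerSeries.mk p) (PowerSeries.C d) (PowerSeries.C d + PowerSeries.X) := by
  ext k
  cases k with
  | zero => simpa [add_mul] using h_zero.eq
  | succ k => simpa [add_mul, PowerSeries.coeff_succ_X_mul] using h_succ k

theorem coeff_C_add_X_pow_mul (d : A) (f : PowerSeries A) (k ℓ : ℕ) :
    PowerSeries.coeff k ((PowerSeries.C d + PowerSeries.X) ^ ℓ * f) =
      ∑ j ∈ Finset.range (min k ℓ + 1),
        ℓ.choose j • (d ^ (ℓ - j) * PowerSeries.coeff (k - j) f) := by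
  have h_range : (Finset.range (ℓ + 1)).filter (· ≤ k) = Finset.range (min k ℓ + 1) := by
    ext j
    simp only [Finset.mem_filter, Finset.mem_range]
    omega
  have h_coeff (j : ℕ) :
      PowerSeries.coeff k
          (PowerSeries.X ^ j * PowerSeries.C d ^ (ℓ - j) * (ℓ.choose j : PowerSeries A) * f) =
        if j ≤ k then ℓ.choose j • (d ^ (ℓ - j) * PowerSeries.coeff (k - j) f) else 0 := by
    rw [← (Nat.cast_commute (ℓ.choose j) _).eq, mul_assoc, mul_assoc, ← nsmul_eq_mul, map_nsmul,
      PowerSeries.coeff_X_pow_mul', ← map_pow, PowerSeries.coeff_C_mul, smul_ite, smul_zero]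
  rw [add_comm, (PowerSeries.commute_X _).symm.add_pow, Finset.sum_mul, map_sum,
    Finset.sum_congr rfl fun j _ ↦ h_coeff j, ← Finset.sum_filter, h_range]

theorem mul_pow_eq_sum_choose_smul {p : ℕ → A} {d : A} (h_zero : Commute (p 0) d)
    (h_succ : ∀ k, p (k + 1) * d = d * p (k + 1) + p k) (k ℓ : ℕ) :
    p k * d ^ ℓ =
      ∑ j ∈ Finset.range (min k ℓ + 1), ℓ.choose j • (d ^ (ℓ - j) * p (k - j)) := by
  have h_coeff := congrArg (PowerSeries.coeff k)
    ((semiconjBy_mk_C_add_X h_zero h_succ).pow_right ℓ).eq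
  simpa only [← map_pow, PowerSeries.coeff_mul_C, PowerSeries.coeff_mk,
    coeff_C_add_X_pow_mul] using h_coeff

end GeneratingSeries

section TotalDerivative

variable {R ι : Type*} [CommRing R]
  {D : Derivation R (MvPolynomial (ι × ℕ) R) (MvPolynomial (ι × ℕ) R)}

theorem lie_pderiv_zero_eq_zero (hD : ∀ (a : ι) (k : ℕ), D (X (a, k)) = X (a, k + 1)) (a : ι) :
    ⁅pderiv (R := R) (a, 0), D⁆ = 0 := by
  classical
  refine derivation_ext fun ⟨b, m⟩ ↦ ?_
  simp [Derivation.commutator_apply, hD, pderiv_X, Pi.single_apply, apply_ite D]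

theorem lie_pderiv_succ_eq_pderiv (hD : ∀ (a : ι) (k : ℕ), D (X (a, k)) = X (a, k + 1))
    (a : ι) (k : ℕ) : ⁅pderiv (R := R) (a, k + 1), D⁆ = pderiv (a, k) := by
  classical
  refine derivation_ext fun ⟨b, m⟩ ↦ ?_
  simp [Derivation.commutator_apply, hD, pderiv_X, Pi.single_apply, apply_ite D]

theorem stmt_2_general (hD : ∀ (a : ι) (k : ℕ), D (X (a, k)) = X (a, k + 1))
    (u : MvPolynomial (ι × ℕ) R) (a : ι) (k ℓ : ℕ) :
    pderiv (a, k) ((⇑D)^[ℓ] u) =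
      ∑ j ∈ Finset.range (min k ℓ + 1),
        ℓ.choose j • (⇑D)^[ℓ - j] (pderiv (a, k - j) u) := by
  let p (k : ℕ) : Module.End R (MvPolynomial (ι × ℕ) R) := (pderiv (a, k)).toLinearMap
  let d : Module.End R (MvPolynomial (ι × ℕ) R) := D.toLinearMap
  have h_zero : Commute (p 0) d := by
    refine LinearMap.ext fun v ↦ sub_eq_zero.mp ?_
    exact DFunLike.congr_fun (lie_pderiv_zero_eq_zero hD a) v
  have h_succ (k : ℕ) : p (k + 1) * d = d * p (k + 1) + p k := by
    refine LinearMap.ext fun v ↦ sub_eq_iff_eq_add'.mp ?_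
    exact DFunLike.congr_fun (lie_pderiv_succ_eq_pderiv hD a k) v
  simpa [p, d, Module.End.pow_apply] using
    LinearMap.congr_fun (mul_pow_eq_sum_choose_smul h_zero h_succ k ℓ) u

end TotalDerivative

/-- The commutation law `∂_{k,a} ∘ ∂^ℓ = ∑_j binom(ℓ,j) ∂^{ℓ-j} ∘ ∂_{k-j,a}`. -/
theorem stmt_2 (ι : Type*) [Fintype ι]
    (D : Derivation ℂ (MvPolynomial (ι × ℕ) ℂ) (MvPolynomial (ι × ℕ) ℂ))
    (hD : ∀ (a : ι) (k : ℕ), D (X (a, k)) = X (a, k + 1))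
    (u : MvPolynomial (ι × ℕ) ℂ) (a : ι) (k ℓ : ℕ) :
    pderiv (a, k) ((⇑D)^[ℓ] u) =
      ∑ j ∈ Finset.range (min k ℓ + 1),
        ℓ.choose j • (⇑D)^[ℓ - j] (pderiv (a, k - j) u) :=
  stmt_2_general hD u a k ℓ
end

section
/- Let ι be a finite type, f : ι → MvPolynomial ι ℂ, and let F : R → R be the unique ℂ-algebra homomorphism with F(t^a_0) = ĵ(f a) for all a and F ∘ ∂ = ∂ ∘ F. Set Ĵ_a^b := ĵ( pderiv a (f b) ) ∈ R. Then for every u ∈ R, every a ∈ ι and every k ∈ ℕ: δ_{k,a}(F u) = ∑_{b ∈ ι} Ĵ_a^b · F( δ_{k,b} u ). -/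
open MvPolynomial

/-- The higher Euler operator `δ_{k,a} u = ∑_i (-1)^i binom(k+i,k) ∂^i(∂_{k+i,a} u)`. -/
noncomputable def eulerOp {ι : Type*}
    (D : Derivation ℂ (MvPolynomial (ι × ℕ) ℂ) (MvPolynomial (ι × ℕ) ℂ))
    (k : ℕ) (a : ι) (u : MvPolynomial (ι × ℕ) ℂ) : MvPolynomial (ι × ℕ) ℂ :=
  ∑ᶠ i : ℕ, ((-1 : ℂ) ^ i * ((k + i).choose k : ℂ)) • (⇑D)^[i] (pderiv (a, k + i) u)

/-!
Writing `δ_{k,a} = ∑_n binom(n,k) (-∂)^{n-k} ∂_{n,a}`, the chain rule and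
`∂_{m,a} F(t^b_n) = binom(n,m) ∂^{n-m} Ĵ_a^b` turn `δ_{k,a}(F u)` into the sum over `b` and `n` of
`∑_m binom(m,k) binom(n,m) (-∂)^{m-k} (∂^{n-m} Ĵ_a^b · F(∂_{n,b} u))`. Since
`binom(n,m) binom(m,k) = binom(n,k) binom(n-k,m-k)`, the sum over `m` is an inverted Leibniz
formula and collapses to `binom(n,k) Ĵ_a^b · (-∂)^{n-k} F(∂_{n,b} u)`.
-/

open Finset (range)
open Finset.HasAntidiagonal (antidiagonal)

section Leibniz

variable {K A : Type*} [CommRing K] [CommRing A] [Algebra K A]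

theorem sum_antidiagonal_choose_smul_neg_derivation_pow (D : Derivation K A A) (y : A) (n : ℕ)
    (x : A) :
    ∑ ij ∈ antidiagonal n, n.choose ij.1 •
        ((-D.toLinearMap) ^ ij.1) ((D.toLinearMap ^ ij.2) x * y) =
      x * ((-D.toLinearMap) ^ n) y := by
  induction n generalizing x with
  | zero => simp
  | succ n ih =>
    have sum_fst : ∑ ij ∈ antidiagonal n, n.choose ij.1 •
        ((-D.toLinearMap) ^ ij.1) ((D.toLinearMap ^ (ij.2 + 1)) x * y) =
        D x * ((-D.toLinearMap) ^ n) y := by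
      simpa only [pow_succ, Module.End.mul_apply, Derivation.coeFn_coe] using ih (D x)
    have sum_snd : ∑ ij ∈ antidiagonal n, n.choose ij.2 •
        ((-D.toLinearMap) ^ (ij.1 + 1)) ((D.toLinearMap ^ ij.2) x * y) =
        -D (x * ((-D.toLinearMap) ^ n) y) := by
      rw [← ih x, ← Derivation.coeFn_coe, ← LinearMap.neg_apply, map_sum]
      refine Finset.sum_congr rfl fun ij hij => ?_
      rw [map_nsmul, pow_succ', Module.End.mul_apply,
        Nat.choose_symm_of_eq_add (Finset.HasAntidiagonal.mem_antidiagonal.mp hij).symm]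
    rw [Finset.sum_antidiagonal_choose_succ_nsmul (fun i j =>
        ((-D.toLinearMap) ^ i) ((D.toLinearMap ^ j) x * y)),
      sum_fst, sum_snd, Derivation.leibniz, pow_succ', Module.End.mul_apply, LinearMap.neg_apply,
      Derivation.coeFn_coe]
    simp only [smul_eq_mul]
    ring

theorem sum_range_choose_smul_choose_smul_neg_derivation_pow (D : Derivation K A A) (x y : A)
    (k : ℕ) {n N : ℕ} (hn : n < N) :
    ∑ m ∈ range N, m.choose k • ((-D.toLinearMap) ^ (m - k))
        (n.choose m • ((D.toLinearMap ^ (n - m)) x * y)) =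
      n.choose k • (x * ((-D.toLinearMap) ^ (n - k)) y) := by
  have combine_coefficients (m : ℕ) : m.choose k • ((-D.toLinearMap) ^ (m - k))
      (n.choose m • ((D.toLinearMap ^ (n - m)) x * y)) =
      (n.choose m * m.choose k) • ((-D.toLinearMap) ^ (m - k))
        ((D.toLinearMap ^ (n - m)) x * y) := by
    rw [map_nsmul, smul_smul, mul_comm]
  simp only [combine_coefficients]
  rcases lt_or_ge n k with hnk | hkn
  · rw [Nat.choose_eq_zero_of_lt hnk, zero_smul]
    refine Finset.sum_eq_zero fun m _ => ?_
    rcases lt_or_ge m k with hmk | hkm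
    · rw [Nat.choose_eq_zero_of_lt hmk, mul_zero, zero_smul]
    · rw [Nat.choose_eq_zero_of_lt (hnk.trans_le hkm), zero_mul, zero_smul]
  obtain ⟨p, rfl⟩ := Nat.exists_eq_add_of_le hkn
  have restrict_range : range (k + (p + 1)) ⊆ range N := Finset.range_subset_range.mpr (by omega)
  rw [← Finset.sum_subset restrict_range, Finset.sum_range_add, Finset.sum_eq_zero, zero_add,
    Nat.add_sub_cancel_left, ← sum_antidiagonal_choose_smul_neg_derivation_pow,
    Finset.Nat.sum_antidiagonal_eq_sum_range_succ_mk, Finset.smul_sum]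
  · refine Finset.sum_congr rfl fun i _ => ?_
    rw [Nat.choose_mul (Nat.le_add_right k i), mul_smul, Nat.add_sub_cancel_left,
      Nat.add_sub_cancel_left, Nat.add_sub_add_left]
  · intro m hm
    rw [Nat.choose_eq_zero_of_lt (Finset.mem_range.mp hm), mul_zero, zero_smul]
  · intro m _ hm
    have hpm : k + p < m := by simpa [Nat.succ_le_iff, ← add_assoc] using hm
    rw [Nat.choose_eq_zero_of_lt hpm, zero_mul, zero_smul]

end Leibniz

section PartialDerivatives

variable {K σ τ : Type*} [CommSemiring K]

theorem pderiv_eq_zero_of_mem_supported {s : Set σ} {u : MvPolynomial σ K}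
    (hu : u ∈ supported K s) {x : σ} (hx : x ∉ s) : pderiv x u = 0 :=
  pderiv_eq_zero_of_notMem_vars fun hxu => hx (mem_supported.mp hu hxu)

theorem pderiv_rename_of_notMem_range {f : σ → τ} {y : τ} (hy : y ∉ Set.range f)
    (p : MvPolynomial σ K) : pderiv y (rename f p) = 0 := by
  classical
  refine pderiv_eq_zero_of_notMem_vars fun hmem => hy ?_
  obtain ⟨x, -, hx⟩ := Finset.mem_image.mp (vars_rename _ _ hmem)
  exact ⟨x, hx⟩

theorem exists_mem_supported_product_range (u : MvPolynomial (σ × ℕ) K) :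
    ∃ (s : Finset σ) (N : ℕ), u ∈ supported K (↑(s ×ˢ range N) : Set (σ × ℕ)) := by
  classical
  refine ⟨u.vars.image Prod.fst, u.vars.sup Prod.snd + 1, ?_⟩
  rw [mem_supported, Finset.coe_subset]
  intro x hx
  exact Finset.mem_product.mpr ⟨Finset.mem_image_of_mem _ hx,
    Finset.mem_range_succ_iff.mpr (Finset.le_sup hx)⟩

theorem derivation_algHom_eq_sum_pderiv {A M : Type*} [CommSemiring A] [Algebra K A]
    [AddCommMonoid M] [Module K M] [Module A M] (d : Derivation K A M)
    (φ : MvPolynomial σ K →ₐ[K] A) {s : Finset σ} {u : MvPolynomial σ K}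
    (hu : u ∈ supported K (s : Set σ)) :
    d (φ u) = ∑ x ∈ s, φ (pderiv x u) • d (φ (X x)) := by
  induction hu using Algebra.adjoin_induction with
  | mem _ h =>
    obtain ⟨x, hx, rfl⟩ := h
    rw [Finset.sum_eq_single_of_mem x hx fun y _ hyx => ?_, pderiv_X_self, map_one, one_smul]
    rw [pderiv_X_of_ne hyx.symm, map_zero, zero_smul]
  | algebraMap r => simp
  | add p q _ _ hp hq => simp only [map_add, hp, hq, add_smul, Finset.sum_add_distrib]
  | mul p q _ _ hp hq =>
    simp only [map_mul, map_add, Derivation.leibniz, hp, hq, smul_eq_mul, Finset.smul_sum,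
      add_smul, mul_smul, Finset.sum_add_distrib]

end PartialDerivatives

section Jets

variable {K ι κ : Type*} [CommRing K]

variable (K ι) in
/-- The total derivative `∂` of the jet algebra: the derivation with `∂ t^a_k = t^a_{k+1}`, where
`t^a_k` is encoded as `X (a, k)`. -/
noncomputable def totalDerivative :
    Derivation K (MvPolynomial (ι × ℕ) K) (MvPolynomial (ι × ℕ) K) :=
  mkDerivation K fun x => X (x.1, x.2 + 1)

/-- The higher Euler operator `δ_{k,a}` of the jet algebra over an arbitrary commutative ring. Only
finitely many terms of the sum are nonzero, since `u` involves finitely many variables. -/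
noncomputable def higherEuler (k : ℕ) (a : ι) (u : MvPolynomial (ι × ℕ) K) :
    MvPolynomial (ι × ℕ) K :=
  ∑ᶠ i : ℕ, ((-1 : K) ^ i * ((k + i).choose k : K)) •
    (⇑(totalDerivative K ι))^[i] (pderiv (a, k + i) u)

theorem totalDerivative_X (a : ι) (k : ℕ) :
    totalDerivative K ι (X (a, k)) = X (a, k + 1) :=
  mkDerivation_X K _ _

theorem X_eq_totalDerivative_pow (a : ι) (n : ℕ) :
    (X (a, n) : MvPolynomial (ι × ℕ) K) =
      ((totalDerivative K ι).toLinearMap ^ n) (X (a, 0)) := by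
  induction n with
  | zero => rfl
  | succ n ih =>
    rw [pow_succ', Module.End.mul_apply, ← ih, Derivation.coeFn_coe, totalDerivative_X]

theorem pderiv_zero_totalDerivative (a : ι) (u : MvPolynomial (ι × ℕ) K) :
    pderiv (a, 0) (totalDerivative K ι u) = totalDerivative K ι (pderiv (a, 0) u) := by
  classical
  have commutator_eq : ⁅pderiv (R := K) (a, 0), totalDerivative K ι⁆ = 0 := by
    refine derivation_ext fun ⟨b, n⟩ => ?_
    rw [Derivation.commutator_apply, totalDerivative_X, pderiv_X, pderiv_X]
    simp only [Pi.single_apply, Prod.mk.injEq]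
    split_ifs <;> simp_all
  rw [← sub_eq_zero, ← Derivation.commutator_apply, commutator_eq, Derivation.zero_apply]

theorem pderiv_succ_totalDerivative (a : ι) (m : ℕ) (u : MvPolynomial (ι × ℕ) K) :
    pderiv (a, m + 1) (totalDerivative K ι u) =
      totalDerivative K ι (pderiv (a, m + 1) u) + pderiv (a, m) u := by
  classical
  have commutator_eq : ⁅pderiv (R := K) (a, m + 1), totalDerivative K ι⁆ = pderiv (a, m) := by
    refine derivation_ext fun ⟨b, n⟩ => ?_
    rw [Derivation.commutator_apply, totalDerivative_X, pderiv_X, pderiv_X, pderiv_X]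
    simp only [Pi.single_apply, Prod.mk.injEq, add_left_inj]
    split_ifs <;> simp
  rw [← sub_eq_iff_eq_add', ← Derivation.commutator_apply, commutator_eq]

theorem pderiv_totalDerivative_pow {a : ι} {g : MvPolynomial (ι × ℕ) K}
    (hg : ∀ m, pderiv (a, m + 1) g = 0) (n m : ℕ) :
    pderiv (a, m) (((totalDerivative K ι).toLinearMap ^ n) g) =
      n.choose m • ((totalDerivative K ι).toLinearMap ^ (n - m)) (pderiv (a, 0) g) := by
  induction n generalizing m with
  | zero => cases m <;> simp [hg]
  | succ n ih =>
    rw [pow_succ', Module.End.mul_apply, Derivation.coeFn_coe]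
    cases m with
    | zero =>
      rw [pderiv_zero_totalDerivative, ih]
      simp [pow_succ']
    | succ m =>
      rw [pderiv_succ_totalDerivative, ih, ih, Nat.choose_succ_succ, Nat.add_sub_add_right,
        add_smul, add_comm, map_nsmul, ← Derivation.coeFn_coe (totalDerivative K ι),
        ← Module.End.mul_apply, ← pow_succ']
      rcases lt_or_ge m n with hmn | hnm
      · rw [show n - (m + 1) + 1 = n - m by omega]
      · rw [Nat.choose_eq_zero_of_lt (Nat.lt_succ_of_le hnm), zero_smul, zero_smul]

theorem higherEuler_eq_sum {a : ι} {u : MvPolynomial (ι × ℕ) K} {N : ℕ}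
    (hu : ∀ n ≥ N, pderiv (a, n) u = 0) (k : ℕ) :
    higherEuler k a u = ∑ n ∈ range N,
      n.choose k • ((-(totalDerivative K ι).toLinearMap) ^ (n - k)) (pderiv (a, n) u) := by
  have term_eq (i : ℕ) : ((-1 : K) ^ i * ((k + i).choose k : K)) •
      (⇑(totalDerivative K ι))^[i] (pderiv (a, k + i) u) =
      (k + i).choose k • ((-(totalDerivative K ι).toLinearMap) ^ i) (pderiv (a, k + i) u) := by
    rw [← neg_one_smul K (totalDerivative K ι).toLinearMap, smul_pow, LinearMap.smul_apply,
      Module.End.pow_apply, Derivation.coeFn_coe, mul_comm, mul_smul, Nat.cast_smul_eq_nsmul]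
  have enlarge_range : range N ⊆ range (k + N) := Finset.range_subset_range.mpr (by omega)
  rw [higherEuler, finsum_congr term_eq, Finset.sum_subset enlarge_range, Finset.sum_range_add,
    Finset.sum_eq_zero, zero_add]
  · simp only [Nat.add_sub_cancel_left]
    refine finsum_eq_sum_of_support_subset _ fun i hi => ?_
    by_contra hiN
    have hNi : N ≤ i := by simpa using hiN
    exact hi (by simp only [hu _ (hNi.trans (Nat.le_add_left i k)), map_zero, smul_zero])
  · intro n hn
    rw [Nat.choose_eq_zero_of_lt (Finset.mem_range.mp hn), zero_smul]
  · intro n _ hn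
    rw [hu n (by simpa using hn), map_zero, smul_zero]

variable {F : MvPolynomial (ι × ℕ) K →ₐ[K] MvPolynomial (κ × ℕ) K}

theorem map_totalDerivative_pow
    (hFD : ∀ u, F (totalDerivative K ι u) = totalDerivative K κ (F u))
    (n : ℕ) (u : MvPolynomial (ι × ℕ) K) :
    F (((totalDerivative K ι).toLinearMap ^ n) u) =
      ((totalDerivative K κ).toLinearMap ^ n) (F u) :=
  (LinearMap.congr_fun (Module.End.commute_pow_left_of_commute (f := F.toLinearMap)
    (LinearMap.ext fun v => (hFD v).symm) n) u).symm

theorem map_neg_totalDerivative_pow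
    (hFD : ∀ u, F (totalDerivative K ι u) = totalDerivative K κ (F u))
    (n : ℕ) (u : MvPolynomial (ι × ℕ) K) :
    F (((-(totalDerivative K ι).toLinearMap) ^ n) u) =
      ((-(totalDerivative K κ).toLinearMap) ^ n) (F u) := by
  have neg_comm : (-(totalDerivative K κ).toLinearMap) ∘ₗ F.toLinearMap =
      F.toLinearMap ∘ₗ (-(totalDerivative K ι).toLinearMap) :=
    LinearMap.ext fun v => by simp [hFD]
  exact (LinearMap.congr_fun (Module.End.commute_pow_left_of_commute neg_comm n) u).symm

theorem pderiv_map_eq_sum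
    (hFD : ∀ u, F (totalDerivative K ι u) = totalDerivative K κ (F u)) {a : κ}
    (hF0 : ∀ b m, pderiv (a, m + 1) (F (X (b, 0))) = 0) {s : Finset ι} {N : ℕ}
    {u : MvPolynomial (ι × ℕ) K} (hu : u ∈ supported K (↑(s ×ˢ range N) : Set (ι × ℕ))) (m : ℕ) :
    pderiv (a, m) (F u) = ∑ b ∈ s, ∑ n ∈ range N, n.choose m •
      (((totalDerivative K κ).toLinearMap ^ (n - m)) (pderiv (a, 0) (F (X (b, 0)))) *
        F (pderiv (b, n) u)) := by
  rw [derivation_algHom_eq_sum_pderiv _ F hu, Finset.sum_product]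
  refine Finset.sum_congr rfl fun b _ => Finset.sum_congr rfl fun n _ => ?_
  rw [X_eq_totalDerivative_pow, map_totalDerivative_pow hFD, pderiv_totalDerivative_pow (hF0 b),
    smul_eq_mul, mul_comm, smul_mul_assoc]

theorem higherEuler_map_eq_sum
    (hFD : ∀ u, F (totalDerivative K ι u) = totalDerivative K κ (F u)) {a : κ}
    (hF0 : ∀ b m, pderiv (a, m + 1) (F (X (b, 0))) = 0) {s : Finset ι} {N : ℕ}
    {u : MvPolynomial (ι × ℕ) K} (hu : u ∈ supported K (↑(s ×ˢ range N) : Set (ι × ℕ))) (k : ℕ) :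
    higherEuler k a (F u) =
      ∑ b ∈ s, pderiv (a, 0) (F (X (b, 0))) * F (higherEuler k b u) := by
  have pderiv_u_eq_zero (b : ι) : ∀ n ≥ N, pderiv (b, n) u = 0 := fun n hn =>
    pderiv_eq_zero_of_mem_supported hu (by simp [hn])
  have pderiv_Fu_eq_zero : ∀ m ≥ N, pderiv (a, m) (F u) = 0 := fun m hm => by
    rw [pderiv_map_eq_sum hFD hF0 hu]
    refine Finset.sum_eq_zero fun b _ => Finset.sum_eq_zero fun n hn => ?_
    rw [Nat.choose_eq_zero_of_lt ((Finset.mem_range.mp hn).trans_le hm), zero_smul]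
  rw [higherEuler_eq_sum pderiv_Fu_eq_zero]
  simp only [pderiv_map_eq_sum hFD hF0 hu, map_sum, Finset.smul_sum]
  rw [Finset.sum_comm]
  refine Finset.sum_congr rfl fun b _ => ?_
  rw [Finset.sum_comm, higherEuler_eq_sum (pderiv_u_eq_zero b), map_sum, Finset.mul_sum]
  refine Finset.sum_congr rfl fun n hn => ?_
  rw [sum_range_choose_smul_choose_smul_neg_derivation_pow _ _ _ k (Finset.mem_range.mp hn),
    map_nsmul, map_neg_totalDerivative_pow hFD, mul_smul_comm]

/-- The sum is finite: `higherEuler k b u = 0` unless some `X (b, n)` occurs in `u`. -/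
theorem stmt_4_general (f : ι → MvPolynomial κ K)
    (hF0 : ∀ b, F (X (b, 0)) = rename (fun c : κ => (c, 0)) (f b))
    (hFD : ∀ u, F (totalDerivative K ι u) = totalDerivative K κ (F u))
    (u : MvPolynomial (ι × ℕ) K) (a : κ) (k : ℕ) :
    higherEuler k a (F u) =
      ∑ᶠ b : ι, rename (fun c : κ => (c, 0)) (pderiv a (f b)) * F (higherEuler k b u) := by
  obtain ⟨s, N, hu⟩ := exists_mem_supported_product_range u
  have support_subset : (Function.support fun b : ι =>
      rename (fun c : κ => (c, 0)) (pderiv a (f b)) * F (higherEuler k b u)) ⊆ s := by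
    intro b hb
    by_contra hbs
    have pderiv_eq_zero : ∀ n ≥ 0, pderiv (b, n) u = 0 := fun n _ =>
      pderiv_eq_zero_of_mem_supported hu fun hbn => hbs (Finset.mem_product.mp hbn).1
    exact hb (by simp [higherEuler_eq_sum pderiv_eq_zero])
  rw [finsum_eq_sum_of_support_subset _ support_subset, higherEuler_map_eq_sum hFD
    (fun b m => by rw [hF0, pderiv_rename_of_notMem_range (by simp)]) hu]
  refine Finset.sum_congr rfl fun b _ => ?_
  rw [hF0, pderiv_rename (Prod.mk_left_injective 0)]

end Jets

/-- The covariant transformation law of the higher Euler operators under prolonged maps: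
`δ_{k,a}(F u) = ∑_b Ĵ_a^b · F(δ_{k,b} u)`. -/
theorem stmt_4 (ι : Type*) [Fintype ι] (f : ι → MvPolynomial ι ℂ)
    (D : Derivation ℂ (MvPolynomial (ι × ℕ) ℂ) (MvPolynomial (ι × ℕ) ℂ))
    (hD : ∀ (a : ι) (k : ℕ), D (X (a, k)) = X (a, k + 1))
    (F : MvPolynomial (ι × ℕ) ℂ →ₐ[ℂ] MvPolynomial (ι × ℕ) ℂ)
    (hF0 : ∀ a : ι, F (X (a, 0)) = rename (fun a : ι => (a, 0)) (f a))
    (hFD : ∀ u : MvPolynomial (ι × ℕ) ℂ, F (D u) = D (F u))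
    (u : MvPolynomial (ι × ℕ) ℂ) (a : ι) (k : ℕ) :
    eulerOp D k a (F u) =
      ∑ b : ι, rename (fun a : ι => (a, 0)) (pderiv a (f b)) * F (eulerOp D k b u) := by
  obtain rfl : D = totalDerivative ℂ ι :=
    derivation_ext fun x => (hD x.1 x.2).trans (totalDerivative_X x.1 x.2).symm
  exact (stmt_4_general f hF0 hFD u a k).trans (finsum_eq_sum_of_fintype _)
end

section
/- Let ι be a finite type and let P : ι → ι → R be arbitrary. Define the Soloviev bracket {u,v} := -∑_{k,ℓ ≥ 0} ∂^{k+ℓ}( ∑_{a,b ∈ ι} (P a b) · (δ_{k,a} u) · (δ_{ℓ,b} v) ), where the sums over k and ℓ have only finitely many nonzero terms since δ_{k,a} u = 0 and δ_{ℓ,b} v = 0 for all large k, ℓ. Then for all u, v ∈ R one has ∂{u,v} = {u, ∂v}. -/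
open MvPolynomial

/-- Soloviev's bracket `{u,v} = -∑_{k,ℓ} ∂^{k+ℓ}( P^{ab} δ_{k,a}u δ_{ℓ,b}v )`. -/
noncomputable def solovievBracket {ι : Type*} [Fintype ι]
    (D : Derivation ℂ (MvPolynomial (ι × ℕ) ℂ) (MvPolynomial (ι × ℕ) ℂ))
    (P : ι → ι → MvPolynomial (ι × ℕ) ℂ)
    (u v : MvPolynomial (ι × ℕ) ℂ) : MvPolynomial (ι × ℕ) ℂ :=
  -∑ᶠ (k : ℕ) (ℓ : ℕ),
    (⇑D)^[k + ℓ] (∑ a : ι, ∑ b : ι, P a b * eulerOp D k a u * eulerOp D ℓ b v)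

/-!
A finitely supported series whose terms are `g 0, g 1 - g 0, g 2 - g 1, …` sums to zero. The
commutation rule `∂_{m,a} ∂ = ∂ ∂_{m,a} + ∂_{m-1,a}`, with `∂_{-1,a} = 0`, brings both
`δ_{0,a} (∂ v)` and `δ_{k+1,a} (∂ v) - δ_{k,a} v` into this form, the latter by Pascal's rule. So
replacing `v` by `∂ v` kills the `ℓ = 0` terms of the bracket, while its `(k, ℓ + 1)` term becomes
the derivative of the `(k, ℓ)` term for `v`.
-/

open Function

lemma hasFiniteSupport_map {α M N : Type*} [Zero M] [Zero N] {f : α → M}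
    (hf : HasFiniteSupport f) {g : α → M → N} (hg : ∀ x, g x 0 = 0) :
    HasFiniteSupport fun x ↦ g x (f x) :=
  hf.subset fun x hx hfx ↦ hx <| by simp only [hfx, hg]

lemma finsum_eq_zero_add {M : Type*} [AddCommMonoid M] {f : ℕ → M} (hf : HasFiniteSupport f) :
    ∑ᶠ n, f n = f 0 + ∑ᶠ n, f (n + 1) := by
  obtain ⟨N, hN⟩ := hf.bddAbove
  have hsupp : support f ⊆ Finset.range (N + 1) := fun n hn ↦ by
    simpa [Nat.lt_succ_iff] using hN hn
  have hsupp_succ : support (fun n ↦ f (n + 1)) ⊆ Finset.range N := fun n hn ↦ by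
    simpa using hN hn
  rw [finsum_eq_sum_of_support_subset _ hsupp, finsum_eq_sum_of_support_subset _ hsupp_succ,
    Finset.sum_range_succ', add_comm]

lemma finsum_eq_zero_of_telescoping {M : Type*} [AddCommGroup M] {f g : ℕ → M}
    (hg : HasFiniteSupport g) (hzero : f 0 = g 0)
    (hsucc : ∀ n, f (n + 1) = g (n + 1) - g n) : ∑ᶠ n, f n = 0 := by
  have hf : HasFiniteSupport f := (hg.union (hg.image (· + 1))).subset fun
    | 0, hn => .inl fun hg0 ↦ hn (hzero.trans hg0)
    | n + 1, hn => by
      by_contra! hnot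
      simp_all
  have hg_succ : HasFiniteSupport fun n ↦ g (n + 1) :=
    hg.comp_of_injective (add_left_injective 1)
  rw [finsum_eq_zero_add hf, hzero, finsum_congr hsucc, finsum_sub_distrib hg_succ hg,
    ← add_sub_assoc, ← finsum_eq_zero_add hg, sub_self]

lemma hasFiniteSupport_pderiv {σ R : Type*} [CommSemiring R] (u : MvPolynomial σ R) :
    HasFiniteSupport fun i ↦ pderiv i u :=
  u.vars.finite_toSet.subset fun _ hi ↦ not_imp_comm.1 pderiv_eq_zero_of_notMem_vars hi

lemma hasFiniteSupport_smul_iterate_pderiv {ι R : Type*} [CommSemiring R]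
    {D : Derivation R (MvPolynomial (ι × ℕ) R) (MvPolynomial (ι × ℕ) R)}
    (c : ℕ → R) (n : ℕ → ℕ) (a : ι) (k : ℕ) (u : MvPolynomial (ι × ℕ) R) :
    HasFiniteSupport fun i ↦ c i • D^[n i] (pderiv (a, k + i) u) := by
  have hinj : Injective fun i ↦ (a, k + i) :=
    (Prod.mk_right_injective a).comp (add_right_injective k)
  exact hasFiniteSupport_map (g := fun i w ↦ c i • D^[n i] w)
    ((hasFiniteSupport_pderiv u).comp_of_injective hinj)
    fun i ↦ by rw [iterate_map_zero, smul_zero]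

section TotalDerivative

variable {ι R : Type*} [CommRing R]
  {D : Derivation R (MvPolynomial (ι × ℕ) R) (MvPolynomial (ι × ℕ) R)}

lemma pderiv_zero_totalDeriv (hD : ∀ (a : ι) (k : ℕ), D (X (a, k)) = X (a, k + 1))
    (a : ι) (v : MvPolynomial (ι × ℕ) R) :
    pderiv (a, 0) (D v) = D (pderiv (a, 0) v) := by
  classical
  have hcomm : ⁅(pderiv (a, 0) : Derivation R (MvPolynomial (ι × ℕ) R) _), D⁆ = 0 :=
      derivation_ext fun ⟨b, k⟩ ↦ by
    simp [Derivation.commutator_apply, hD, pderiv_X, Pi.single_apply, apply_ite D]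
  simpa [Derivation.commutator_apply, sub_eq_zero] using DFunLike.congr_fun hcomm v

lemma pderiv_succ_totalDeriv (hD : ∀ (a : ι) (k : ℕ), D (X (a, k)) = X (a, k + 1))
    (a : ι) (m : ℕ) (v : MvPolynomial (ι × ℕ) R) :
    pderiv (a, m + 1) (D v) = D (pderiv (a, m + 1) v) + pderiv (a, m) v := by
  classical
  have hcomm : ⁅(pderiv (a, m + 1) : Derivation R (MvPolynomial (ι × ℕ) R) _), D⁆ = pderiv (a, m) :=
      derivation_ext fun ⟨b, k⟩ ↦ by
    simp [Derivation.commutator_apply, hD, pderiv_X, Pi.single_apply, apply_ite D]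
  simpa [Derivation.commutator_apply, sub_eq_iff_eq_add'] using DFunLike.congr_fun hcomm v

end TotalDerivative

section EulerOperator

variable {ι : Type*} {D : Derivation ℂ (MvPolynomial (ι × ℕ) ℂ) (MvPolynomial (ι × ℕ) ℂ)}

lemma hasFiniteSupport_eulerOp_summand (k : ℕ) (a : ι) (u : MvPolynomial (ι × ℕ) ℂ) :
    HasFiniteSupport fun i ↦
      ((-1 : ℂ) ^ i * ((k + i).choose k : ℂ)) • D^[i] (pderiv (a, k + i) u) :=
  hasFiniteSupport_smul_iterate_pderiv _ _ a k u

lemma eulerOp_eq_zero {k : ℕ} {a : ι} {u : MvPolynomial (ι × ℕ) ℂ}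
    (hu : ∀ m, k ≤ m → pderiv (a, m) u = 0) : eulerOp D k a u = 0 :=
  finsum_eq_zero_of_forall_eq_zero fun i ↦ by
    rw [hu _ (Nat.le_add_right k i), iterate_map_zero, smul_zero]

lemma hasFiniteSupport_eulerOp (a : ι) (u : MvPolynomial (ι × ℕ) ℂ) :
    HasFiniteSupport fun k ↦ eulerOp D k a u := by
  obtain ⟨N, hN⟩ := ((hasFiniteSupport_pderiv u).comp_of_injective
    (Prod.mk_right_injective a)).bddAbove
  refine (Set.finite_Iic N).subset fun k hk ↦ Set.mem_Iic.2 <| le_of_not_gt fun hNk ↦ hk ?_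
  exact eulerOp_eq_zero fun m hkm ↦ not_not.1 fun hm ↦ (hNk.trans_le hkm).not_ge (hN hm)

lemma eulerOp_zero_totalDeriv (hD : ∀ (a : ι) (k : ℕ), D (X (a, k)) = X (a, k + 1))
    (a : ι) (v : MvPolynomial (ι × ℕ) ℂ) : eulerOp D 0 a (D v) = 0 := by
  refine finsum_eq_zero_of_telescoping
    (g := fun i ↦ (-1 : ℂ) ^ i • D^[i + 1] (pderiv (a, 0 + i) v))
    (hasFiniteSupport_smul_iterate_pderiv _ _ a 0 v) ?_ fun i ↦ ?_
  · simp [pderiv_zero_totalDeriv hD]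
  · simp only [zero_add, Nat.choose_zero_right, Nat.cast_one, mul_one,
      pderiv_succ_totalDeriv hD, iterate_map_add, ← iterate_succ_apply]
    module

lemma eulerOp_succ_totalDeriv (hD : ∀ (a : ι) (k : ℕ), D (X (a, k)) = X (a, k + 1))
    (k : ℕ) (a : ι) (v : MvPolynomial (ι × ℕ) ℂ) :
    eulerOp D (k + 1) a (D v) = eulerOp D k a v := by
  have hDv := hasFiniteSupport_eulerOp_summand (D := D) (k + 1) a (D v)
  have hv := hasFiniteSupport_eulerOp_summand (D := D) k a v
  have hderiv (i : ℕ) : D^[i] (pderiv (a, k + 1 + i) (D v)) =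
      D^[i + 1] (pderiv (a, k + 1 + i) v) + D^[i] (pderiv (a, k + i) v) := by
    rw [Nat.add_right_comm, pderiv_succ_totalDeriv hD, iterate_map_add, iterate_succ_apply]
  have hpascal (i : ℕ) : ((k + 1 + i).choose (k + 1) : ℂ) =
      (k + i).choose k + (k + i).choose (k + 1) := by
    rw [Nat.add_right_comm, Nat.choose_succ_succ, Nat.cast_add]
  rw [← sub_eq_zero, eulerOp, eulerOp, ← finsum_sub_distrib hDv hv]
  refine finsum_eq_zero_of_telescoping (g := fun i ↦
      ((-1) ^ i * ((k + 1 + i).choose (k + 1) : ℂ)) • D^[i + 1] (pderiv (a, k + 1 + i) v))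
    (hasFiniteSupport_smul_iterate_pderiv _ _ a (k + 1) v) ?_ fun i ↦ ?_
  · simp [hderiv]
  · have hshift : k + (i + 1) = k + 1 + i := by lia
    simp only [hderiv, hpascal (i + 1), hshift]
    module

end EulerOperator

section Bracket

variable {ι : Type*} [Fintype ι]
  (D : Derivation ℂ (MvPolynomial (ι × ℕ) ℂ) (MvPolynomial (ι × ℕ) ℂ))
  (P : ι → ι → MvPolynomial (ι × ℕ) ℂ) (u v : MvPolynomial (ι × ℕ) ℂ)

/-- The `(k, ℓ)` term of Soloviev's bracket, without the overall sign: the bracket is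
`-∑ᶠ k, ∑ᶠ ℓ, solovievTerm D P u v k ℓ` by definition. -/
noncomputable def solovievTerm (k ℓ : ℕ) : MvPolynomial (ι × ℕ) ℂ :=
  D^[k + ℓ] (∑ a : ι, ∑ b : ι, P a b * eulerOp D k a u * eulerOp D ℓ b v)

lemma hasFiniteSupport_solovievTerm (k : ℕ) : HasFiniteSupport (solovievTerm D P u v k) :=
  hasFiniteSupport_map
    (g := fun ℓ (y : ι → MvPolynomial (ι × ℕ) ℂ) ↦
      D^[k + ℓ] (∑ a : ι, ∑ b : ι, P a b * eulerOp D k a u * y b))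
    (HasFiniteSupport.pi fun b ↦ hasFiniteSupport_eulerOp b v)
    fun ℓ ↦ by simp [iterate_map_zero]

lemma hasFiniteSupport_finsum_solovievTerm :
    HasFiniteSupport fun k ↦ ∑ᶠ ℓ, solovievTerm D P u v k ℓ :=
  hasFiniteSupport_map
    (g := fun k (x : ι → MvPolynomial (ι × ℕ) ℂ) ↦
      ∑ᶠ ℓ, D^[k + ℓ] (∑ a : ι, ∑ b : ι, P a b * x a * eulerOp D ℓ b v))
    (HasFiniteSupport.pi fun a ↦ hasFiniteSupport_eulerOp a u)
    fun k ↦ by simp [iterate_map_zero]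

variable {D}

lemma solovievTerm_totalDeriv_zero (hD : ∀ (a : ι) (k : ℕ), D (X (a, k)) = X (a, k + 1)) (k : ℕ) :
    solovievTerm D P u (D v) k 0 = 0 := by
  simp [solovievTerm, eulerOp_zero_totalDeriv hD, iterate_map_zero]

lemma solovievTerm_totalDeriv_succ (hD : ∀ (a : ι) (k : ℕ), D (X (a, k)) = X (a, k + 1))
    (k ℓ : ℕ) : solovievTerm D P u (D v) k (ℓ + 1) = D (solovievTerm D P u v k ℓ) := by
  simp only [solovievTerm, eulerOp_succ_totalDeriv hD, ← add_assoc, iterate_succ_apply']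

lemma finsum_solovievTerm_totalDeriv (hD : ∀ (a : ι) (k : ℕ), D (X (a, k)) = X (a, k + 1))
    (k : ℕ) : ∑ᶠ ℓ, solovievTerm D P u (D v) k ℓ = D (∑ᶠ ℓ, solovievTerm D P u v k ℓ) := by
  rw [finsum_eq_zero_add (hasFiniteSupport_solovievTerm D P u (D v) k),
    solovievTerm_totalDeriv_zero P u v hD, zero_add,
    map_finsum D (hasFiniteSupport_solovievTerm D P u v k)]
  exact finsum_congr fun ℓ ↦ solovievTerm_totalDeriv_succ P u v hD k ℓ

end Bracket

/-- Soloviev's bracket intertwines the total derivative: `∂{u,v} = {u,∂v}`. -/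
theorem stmt_6 (ι : Type*) [Fintype ι]
    (D : Derivation ℂ (MvPolynomial (ι × ℕ) ℂ) (MvPolynomial (ι × ℕ) ℂ))
    (hD : ∀ (a : ι) (k : ℕ), D (X (a, k)) = X (a, k + 1))
    (P : ι → ι → MvPolynomial (ι × ℕ) ℂ)
    (u v : MvPolynomial (ι × ℕ) ℂ) :
    D (solovievBracket D P u v) = solovievBracket D P u (D v) := by
  change D (-∑ᶠ k, ∑ᶠ ℓ, solovievTerm D P u v k ℓ) = -∑ᶠ k, ∑ᶠ ℓ, solovievTerm D P u (D v) k ℓ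
  rw [map_neg, map_finsum D (hasFiniteSupport_finsum_solovievTerm D P u v)]
  simp only [finsum_solovievTerm_totalDeriv P u v hD]
end

section
/- Let ι be a finite type. If u ∈ R satisfies ∂u = 0, then u is a constant, i.e. u lies in the image of the structure map algebraMap ℂ R. -/
open MvPolynomial

/-!
Both sides of `[∂/∂t^a_{k+1}, ∂] = ∂/∂t^a_k` are derivations and agree on the variables. Hence,
if `∂ u = 0` and `u` involves `t^a_k`, then `u` also involves `t^a_{k+1}`. So the finite set of
variables of `u` is stable under the index shift `(a, k) ↦ (a, k + 1)`; an injective self-map of a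
finite set has only periodic points, whereas the shift has none, so `u` involves no variable at all.
-/

section Dynamics

open Function

theorem subset_periodicPts_of_mapsTo {α : Type*} {f : α → α} {t : Set α} (ht : t.Finite)
    (hf : Set.InjOn f t) (hft : Set.MapsTo f t t) : t ⊆ periodicPts f := by
  intro x hx
  have : Finite t := ht
  have hinj : Injective (hft.restrict f t t) := hft.restrict_inj.mpr hf
  have hsemi : Semiconj ((↑) : t → α) (hft.restrict f t t) f := fun _ ↦ rfl
  exact hsemi.mapsTo_periodicPts (hinj.mem_periodicPts ⟨x, hx⟩)

theorem periodicPts_prodMap_succ {α : Type*} (f : α → α) :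
    periodicPts (Prod.map f Nat.succ) = ∅ := by
  refine Set.eq_empty_of_forall_notMem ?_
  rintro ⟨a, k⟩ ⟨n, hn, hper⟩
  have hk : Nat.succ^[n] k = k := ((isPeriodicPt_prodMap _).mp hper).2
  rw [Nat.succ_iterate] at hk
  lia

end Dynamics

section VariableShift

variable {σ R : Type*}

theorem pderiv_eq_zero_iff_notMem_vars [CommSemiring R] [IsAddTorsionFree R] {i : σ}
    {p : MvPolynomial σ R} : pderiv i p = 0 ↔ i ∉ p.vars := by
  refine ⟨fun hp hi ↦ ?_, pderiv_eq_zero_of_notMem_vars⟩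
  obtain ⟨m, hm, him⟩ := (mem_vars_iff_mem_support i).mp hi
  set n := m - Finsupp.single i 1
  have hn : n + Finsupp.single i 1 = m :=
    Finsupp.sub_add_single_one_cancel (Finsupp.mem_support_iff.mp him)
  have hcoeff : (n i + 1) • coeff m p = 0 := by
    rw [nsmul_eq_mul', Nat.cast_add_one, ← hn, ← coeff_pderiv, hp, coeff_zero]
  exact smul_ne_zero (Nat.succ_ne_zero _) (mem_support_iff.mp hm) hcoeff

variable [CommRing R] {s : σ → σ} {D : Derivation R (MvPolynomial σ R) (MvPolynomial σ R)}

theorem lie_pderiv_of_apply_X_eq (hs : s.Injective) (hD : ∀ i, D (X i) = X (s i)) (i : σ) :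
    ⁅pderiv (R := R) (s i), D⁆ = pderiv i := by
  classical
  refine derivation_ext fun j ↦ ?_
  have hconst : D (pderiv (s i) (X j)) = 0 := by
    rcases eq_or_ne j (s i) with rfl | hj
    · rw [pderiv_X_self, Derivation.map_one_eq_zero]
    · rw [pderiv_X_of_ne hj, map_zero]
  calc
    ⁅pderiv (R := R) (s i), D⁆ (X j) = pderiv (s i) (X (s j)) := by
      rw [Derivation.commutator_apply, hconst, sub_zero, hD]
    _ = pderiv i (X j) := by simp only [pderiv_X, Pi.single_apply, hs.eq_iff]

variable [IsAddTorsionFree R]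

theorem mapsTo_vars_of_apply_X_eq (hs : s.Injective) (hD : ∀ i, D (X i) = X (s i))
    {u : MvPolynomial σ R} (hu : D u = 0) : Set.MapsTo s u.vars u.vars := by
  intro i hi
  contrapose! hi
  rw [Finset.mem_coe, ← pderiv_eq_zero_iff_notMem_vars] at hi ⊢
  rw [← lie_pderiv_of_apply_X_eq hs hD, Derivation.commutator_apply, hi, hu, map_zero, map_zero,
    sub_zero]

theorem vars_subset_periodicPts_of_apply_X_eq (hs : s.Injective) (hD : ∀ i, D (X i) = X (s i))
    {u : MvPolynomial σ R} (hu : D u = 0) : (u.vars : Set σ) ⊆ Function.periodicPts s :=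
  subset_periodicPts_of_mapsTo u.vars.finite_toSet hs.injOn (mapsTo_vars_of_apply_X_eq hs hD hu)

end VariableShift

theorem stmt_13_general {ι R : Type*} [CommRing R] [IsAddTorsionFree R]
    (D : Derivation R (MvPolynomial (ι × ℕ) R) (MvPolynomial (ι × ℕ) R))
    (hD : ∀ (a : ι) (k : ℕ), D (X (a, k)) = X (a, k + 1))
    (u : MvPolynomial (ι × ℕ) R) (hu : D u = 0) :
    u ∈ Set.range (algebraMap R (MvPolynomial (ι × ℕ) R)) := by
  have hinj : (Prod.map (id : ι → ι) Nat.succ).Injective :=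
    Function.injective_id.prodMap Nat.succ_injective
  have hsubset := vars_subset_periodicPts_of_apply_X_eq hinj (fun i ↦ hD i.1 i.2) hu
  have hvars : u.vars = ∅ := by
    rwa [periodicPts_prodMap_succ, Set.subset_empty_iff, Finset.coe_eq_empty] at hsubset
  exact ⟨coeff 0 u, (vars_eq_empty_iff_eq_C.mp hvars).symm⟩

/-- The kernel of the total derivative on the jet algebra consists of the constants. -/
theorem stmt_13 (ι : Type*) [Fintype ι]
    (D : Derivation ℂ (MvPolynomial (ι × ℕ) ℂ) (MvPolynomial (ι × ℕ) ℂ))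
    (hD : ∀ (a : ι) (k : ℕ), D (X (a, k)) = X (a, k + 1))
    (u : MvPolynomial (ι × ℕ) ℂ) (hu : D u = 0) :
    u ∈ Set.range (algebraMap ℂ (MvPolynomial (ι × ℕ) ℂ)) :=
  stmt_13_general D hD u hu
end

section
/- Let ι be a finite type. Let ρ : R → R be the unique ℂ-derivation with ρ(t^a_0) = 0 and ρ(t^a_{k+1}) = k(k+1) · t^a_k for all a ∈ ι, k ∈ ℕ, and let H : R → R be the unique ℂ-derivation with H(t^a_k) = k · t^a_k for all a, k. Then, as ℂ-linear endomorphisms of R: H∘∂ - ∂∘H = ∂, H∘ρ - ρ∘H = -ρ, and ∂∘ρ - ρ∘∂ = -2·H. (In particular ∂, ρ, H generate an action of the Lie algebra sl(2) on R.) -/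
open MvPolynomial

/-!
The commutator of two derivations is a derivation, so each relation need only be checked on the
variables. There `H` is the grading by jet order, which `∂` raises and `ρ` lowers by one; this gives
the two relations with `H`. On `t^a_k` the commutator of `∂` and `ρ` is multiplication by the
difference `(k - 1) k - k (k + 1) = -2 k` of consecutive coefficients of `ρ`.
-/

section Weight

variable {σ R : Type*} [CommRing R] {E D : Derivation R (MvPolynomial σ R) (MvPolynomial σ R)}

theorem lie_eq_smul_of_apply_X {w : σ → R} {c : R} (hE : ∀ i, E (X i) = w i • X i)
    (hED : ∀ i, E (D (X i)) = (w i + c) • D (X i)) : ⁅E, D⁆ = c • D := by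
  refine derivation_ext fun i => ?_
  calc ⁅E, D⁆ (X i) = (w i + c) • D (X i) - w i • D (X i) := by
        rw [Derivation.commutator_apply, hED, hE, Derivation.map_smul]
    _ = (c • D) (X i) := by rw [← sub_smul, add_sub_cancel_left, Derivation.smul_apply]

end Weight

section Jet

variable {ι R : Type*} [CommRing R]
  {D ρ H : Derivation R (MvPolynomial (ι × ℕ) R) (MvPolynomial (ι × ℕ) R)} {c : ℕ → R}

theorem lie_raise_lower_apply_X_zero (hD : ∀ a k, D (X (a, k)) = X (a, k + 1))
    (hρ0 : ∀ a, ρ (X (a, 0)) = 0) (hρ : ∀ a k, ρ (X (a, k + 1)) = c k • X (a, k)) (a : ι) :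
    ⁅D, ρ⁆ (X (a, 0)) = -c 0 • X (a, 0) := by
  rw [Derivation.commutator_apply, hρ0, map_zero, hD, hρ, zero_sub, neg_smul]

theorem lie_raise_lower_apply_X_succ (hD : ∀ a k, D (X (a, k)) = X (a, k + 1))
    (hρ : ∀ a k, ρ (X (a, k + 1)) = c k • X (a, k)) (a : ι) (k : ℕ) :
    ⁅D, ρ⁆ (X (a, k + 1)) = (c k - c (k + 1)) • X (a, k + 1) := by
  rw [Derivation.commutator_apply, hρ, Derivation.map_smul, hD, hD, hρ, sub_smul]

theorem lie_grading_raise (hD : ∀ a k, D (X (a, k)) = X (a, k + 1))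
    (hH : ∀ a k, H (X (a, k)) = (k : R) • X (a, k)) : ⁅H, D⁆ = D := by
  have hHD : ∀ i : ι × ℕ, H (D (X i)) = ((i.2 : R) + 1) • D (X i) := fun ⟨a, k⟩ => by
    rw [hD, hH, Nat.cast_succ]
  exact (lie_eq_smul_of_apply_X (Prod.forall.2 hH) hHD).trans (one_smul R D)

theorem lie_grading_lower (hρ0 : ∀ a, ρ (X (a, 0)) = 0)
    (hρ : ∀ a k, ρ (X (a, k + 1)) = c k • X (a, k))
    (hH : ∀ a k, H (X (a, k)) = (k : R) • X (a, k)) : ⁅H, ρ⁆ = -ρ := by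
  have hHρ : ∀ i : ι × ℕ, H (ρ (X i)) = ((i.2 : R) + -1) • ρ (X i)
    | (a, 0) => by rw [hρ0, map_zero, smul_zero]
    | (a, k + 1) => by
      rw [hρ, Derivation.map_smul, hH, smul_comm, Nat.cast_succ, add_neg_cancel_right]
  exact (lie_eq_smul_of_apply_X (Prod.forall.2 hH) hHρ).trans (neg_one_smul R ρ)

theorem lie_raise_lower (hD : ∀ a k, D (X (a, k)) = X (a, k + 1))
    (hρ0 : ∀ a, ρ (X (a, 0)) = 0)
    (hρ : ∀ a k, ρ (X (a, k + 1)) = ((k : R) * (k + 1)) • X (a, k))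
    (hH : ∀ a k, H (X (a, k)) = (k : R) • X (a, k)) : ⁅D, ρ⁆ = -(2 • H) := by
  have hX : ∀ a k, (-(2 • H)) (X (a, k)) = (-2 * (k : R)) • X (a, k) := fun a k => by
    rw [Derivation.neg_apply, Derivation.smul_apply, hH]
    module
  refine derivation_ext ?_
  rintro ⟨a, _ | k⟩
  · rw [lie_raise_lower_apply_X_zero (c := fun k => (k : R) * (k + 1)) hD hρ0 hρ, hX]
    simp
  · rw [lie_raise_lower_apply_X_succ (c := fun k => (k : R) * (k + 1)) hD hρ, hX]
    congr 1
    push_cast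
    ring

theorem stmt_14_general (hD : ∀ a k, D (X (a, k)) = X (a, k + 1))
    (hρ0 : ∀ a, ρ (X (a, 0)) = 0)
    (hρ : ∀ a k, ρ (X (a, k + 1)) = (k * (k + 1)) • X (a, k))
    (hH : ∀ a k, H (X (a, k)) = k • X (a, k)) :
    ⁅H, D⁆ = D ∧ ⁅H, ρ⁆ = -ρ ∧ ⁅D, ρ⁆ = -(2 • H) := by
  have hρR : ∀ a k, ρ (X (a, k + 1)) = ((k : R) * (k + 1)) • X (a, k) := fun a k => by
    rw [hρ, ← Nat.cast_smul_eq_nsmul R, Nat.cast_mul, Nat.cast_succ]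
  have hHR : ∀ a k, H (X (a, k)) = (k : R) • X (a, k) := fun a k => by
    rw [hH, Nat.cast_smul_eq_nsmul]
  exact ⟨lie_grading_raise hD hHR, lie_grading_lower hρ0 hρR hHR,
    lie_raise_lower hD hρ0 hρR hHR⟩

end Jet

/-- The `sl(2)` commutation relations among the total derivative `∂`, the lowering operator
`ρ` and the grading operator `H` on the jet algebra. -/
theorem stmt_14 (ι : Type*) [Fintype ι]
    (D ρ H : Derivation ℂ (MvPolynomial (ι × ℕ) ℂ) (MvPolynomial (ι × ℕ) ℂ))
    (hD : ∀ (a : ι) (k : ℕ), D (X (a, k)) = X (a, k + 1))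
    (hρ0 : ∀ a : ι, ρ (X (a, 0)) = 0)
    (hρ : ∀ (a : ι) (k : ℕ), ρ (X (a, k + 1)) = (k * (k + 1)) • X (a, k))
    (hH : ∀ (a : ι) (k : ℕ), H (X (a, k)) = k • X (a, k)) :
    (∀ u : MvPolynomial (ι × ℕ) ℂ, H (D u) - D (H u) = D u) ∧
      (∀ u : MvPolynomial (ι × ℕ) ℂ, H (ρ u) - ρ (H u) = -(ρ u)) ∧
      (∀ u : MvPolynomial (ι × ℕ) ℂ, D (ρ u) - ρ (D u) = -(2 • H u)) := by
  obtain ⟨hHD, hHρ, hDρ⟩ := stmt_14_general hD hρ0 hρ hH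
  exact ⟨DFunLike.congr_fun hHD, DFunLike.congr_fun hHρ, DFunLike.congr_fun hDρ⟩
end

section
/- Let A be an associative unital ℚ-algebra and let ∂, d, d₀, ε, ι ∈ A satisfy: ε·ι + ι·ε = 1; d₀·ι + ι·d₀ = 0; d·ε + ε·d = 0; d·d₀ + d₀·d = 0; d₀·d₀ = 0; ∂·ε = ε·∂; ∂·ι = ι·∂; and ∂·d₀ = d₀·∂. Then (1 + (1/2)·ε·d₀) · (ι·∂ - d + (1/2)·∂·d₀) = (ι·∂ - d) · (1 + (1/2)·ε·d₀). -/
/-!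
Put `N = c ε d₀`, `X = ι∂ - d` and `Y = c ∂ d₀`. Then `[X, N] = Y` and `N Y = 0`, hence
`(1 + N)(X + Y) = X + (N X + Y) = X + X N`. The commutator is computed from
`[a, εd₀] = {a, ε} d₀ - ε {a, d₀}`: it gives `[ι, εd₀] = d₀` and `[d, εd₀] = 0`.
-/

section Ring

variable {A : Type*} [Ring A]

theorem one_add_mul_add_eq_of_lie_eq {x y n : A} (hlie : ⁅x, n⁆ = y) (hmul : n * y = 0) :
    (1 + n) * (x + y) = x * (1 + n) := by
  have hcomm : x * n = n * x + y := by rw [← hlie, Ring.lie_def]; abel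
  calc (1 + n) * (x + y) = x + (n * x + y) + n * y := by noncomm_ring
    _ = x * (1 + n) := by rw [hmul, add_zero, ← hcomm, mul_add, mul_one]

theorem lie_mul_eq_anticommutator_mul_sub (a b c : A) :
    ⁅a, b * c⁆ = (a * b + b * a) * c - b * (a * c + c * a) := by
  rw [Ring.lie_def]
  noncomm_ring

theorem mul_lie_eq_lie_mul_of_commute {a p n : A} (hp : Commute p n) :
    ⁅a * p, n⁆ = ⁅a, n⁆ * p := by
  simp only [Ring.lie_def, sub_mul, mul_assoc, hp.eq]

theorem mul_sub_lie_mul_eq_mul {p d d₀ e i : A}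
    (hei : e * i + i * e = 1) (hd₀i : d₀ * i + i * d₀ = 0)
    (hde : d * e + e * d = 0) (hdd₀ : d * d₀ + d₀ * d = 0)
    (hpe : Commute p e) (hpd₀ : Commute p d₀) :
    ⁅i * p - d, e * d₀⁆ = p * d₀ := by
  have hi : ⁅i, e * d₀⁆ = d₀ := by
    rw [lie_mul_eq_anticommutator_mul_sub, add_comm (i * e), hei, add_comm (i * d₀), hd₀i,
      one_mul, mul_zero, sub_zero]
  have hd : ⁅d, e * d₀⁆ = 0 := by
    rw [lie_mul_eq_anticommutator_mul_sub, hde, hdd₀, zero_mul, mul_zero, sub_zero]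
  calc
    ⁅i * p - d, e * d₀⁆ = ⁅i * p, e * d₀⁆ - ⁅d, e * d₀⁆ := by
      simp only [Ring.lie_def]; noncomm_ring
    _ = ⁅i, e * d₀⁆ * p - ⁅d, e * d₀⁆ := by
      rw [mul_lie_eq_lie_mul_of_commute (hpe.mul_right hpd₀)]
    _ = p * d₀ := by rw [hi, hd, sub_zero, hpd₀.eq]

end Ring

theorem stmt_19_general {R A : Type*} [CommSemiring R] [Ring A] [Algebra R A] (c : R)
    {p d d₀ e i : A}
    (hei : e * i + i * e = 1) (hd₀i : d₀ * i + i * d₀ = 0)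
    (hde : d * e + e * d = 0) (hdd₀ : d * d₀ + d₀ * d = 0) (hd₀ : d₀ * d₀ = 0)
    (hpe : Commute p e) (hpd₀ : Commute p d₀) :
    (1 + c • (e * d₀)) * (i * p - d + c • (p * d₀)) = (i * p - d) * (1 + c • (e * d₀)) := by
  have hlie : ⁅i * p - d, c • (e * d₀)⁆ = c • (p * d₀) := by
    rw [← mul_sub_lie_mul_eq_mul hei hd₀i hde hdd₀ hpe hpd₀]
    simp only [Ring.lie_def, mul_smul_comm, smul_mul_assoc, smul_sub]
  have hmul : e * d₀ * (p * d₀) = 0 := by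
    rw [hpd₀.eq, mul_assoc, ← mul_assoc d₀, hd₀, zero_mul, mul_zero]
  refine one_add_mul_add_eq_of_lie_eq hlie ?_
  rw [smul_mul_smul_comm, hmul, smul_zero]

/-- The operator identity showing that `T = 1 + ½ ε d₀` intertwines `ι∂ - d + ½ ∂ d₀`
with `ι∂ - d`, given the stated (anti)commutation relations. -/
theorem stmt_19 (A : Type*) [Ring A] [Algebra ℚ A]
    (p d d₀ e i : A)
    (h1 : e * i + i * e = 1)
    (h2 : d₀ * i + i * d₀ = 0)
    (h3 : d * e + e * d = 0)
    (h4 : d * d₀ + d₀ * d = 0)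
    (h5 : d₀ * d₀ = 0)
    (h6 : p * e = e * p)
    (h7 : p * i = i * p)
    (h8 : p * d₀ = d₀ * p) :
    (1 + (1 / 2 : ℚ) • (e * d₀)) * (i * p - d + (1 / 2 : ℚ) • (p * d₀)) =
      (i * p - d) * (1 + (1 / 2 : ℚ) • (e * d₀)) :=
  stmt_19_general (1 / 2 : ℚ) h1 h2 h3 h4 h5 h6 h8
end
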